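/- Let f be an expansive homeomorphism of a compact metric space (M,d) with expansivity constant ξ, where d is self-similar for f with expanding factor λ > 1 and constant ξ. Then for all ε > 0 there is δ > 0 such that for any critical triangle (x,y,z) with d(x,y) < δ, setting a = d(x,z), b = d(z,y), c₀ = d(x,y), c₁ = d(f(x), f(y)), one has |c₁/(λ·c₀) − a/b| < ε. -/

import Mathlib

open Filter Topology

/-!
Write `a = d(x, z)`, `b = d(z, y)`, `c₀ = d(x, y)`, `c₁ = d(f x, f y)`. Under `fⁿ` the side `xz`
grows exactly like `λⁿ` and the side `yz` shrinks exactly like `λ⁻ⁿ`, while criticality of `(x, y)`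
makes `d(fⁿ x, fⁿ y) = λⁿ (c₁ / λ)`. The triangle inequality at time `n` therefore reads
`|c₁ / λ - a| ≤ λ⁻²ⁿ b`, and at time `-n` it reads `|c₀ - b| ≤ λ⁻²ⁿ a`. For `n = 1` this bounds `a`
and `b` by a multiple of `c₀`, so small triangles admit the estimates for large `n`; comparing
`c₁ / λ` with `a` and `c₀` with `b` then compares the two ratios.
-/

section RealEstimates

variable {a b c c₁ L s : ℝ}

lemma le_div_sub_one_mul_of_le_add_div (hs : 1 < s) (ha : a ≤ c + b / s) (hb : b ≤ c + a / s) :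
    a ≤ s / (s - 1) * c := by
  have hs₀ : 0 < s := by linarith
  have ha' : a * s ≤ c * s + b := by
    have := mul_le_mul_of_nonneg_right ha hs₀.le
    rwa [add_mul, div_mul_cancel₀ _ hs₀.ne'] at this
  have hb' : b * s ≤ c * s + a := by
    have := mul_le_mul_of_nonneg_right hb hs₀.le
    rwa [add_mul, div_mul_cancel₀ _ hs₀.ne'] at this
  rw [div_mul_eq_mul_div, le_div_iff₀ (by linarith)]
  have : (a * (s - 1)) * (s + 1) ≤ (s * c) * (s + 1) := by nlinarith
  exact le_of_mul_le_mul_right this (by linarith)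

lemma abs_div_sub_div_le (hc : 0 < c) (ha : 0 ≤ a) (hs : 0 < s) (hLs : 2 * L ≤ s)
    (haL : a ≤ L * c) (hbL : b ≤ L * c) (h₁ : |c₁ - a| ≤ b / s) (h₀ : |c - b| ≤ a / s) :
    |c₁ / c - a / b| ≤ 4 * L ^ 2 / s := by
  have hcb : c / 2 ≤ b := by
    have : a / s ≤ c / 2 := by
      rw [div_le_iff₀ hs]
      nlinarith
    linarith [le_abs_self (c - b)]
  have hb : 0 < b := by linarith
  have hdiff : c₁ / c - a / b = ((c₁ - a) * b - a * (c - b)) / (c * b) := by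
    field_simp
    ring
  rw [hdiff, abs_div, abs_of_pos (mul_pos hc hb), div_le_iff₀ (mul_pos hc hb)]
  calc |(c₁ - a) * b - a * (c - b)|
      ≤ |c₁ - a| * b + a * |c - b| := by
        simpa only [abs_mul, abs_of_pos hb, abs_of_nonneg ha] using
          abs_sub ((c₁ - a) * b) (a * (c - b))
    _ ≤ b / s * b + a * (a / s) := by gcongr
    _ = (b ^ 2 + a ^ 2) / s := by ring
    _ ≤ ((L * c) ^ 2 + (L * c) ^ 2) / s := by gcongr
    _ = 4 * L ^ 2 / s * (c * (c / 2)) := by ring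
    _ ≤ 4 * L ^ 2 / s * (c * b) := by gcongr

end RealEstimates

section SelfSimilar

variable {M : Type*} [PseudoMetricSpace M]

/-- The distance is self-similar for `f` with expanding factor `lam` and constant `ξ`. -/
def IsSelfSimilar (f : Equiv.Perm M) (ξ lam : ℝ) : Prop :=
  ∀ p q : M, dist p q ≤ ξ →
    max (dist (f p) (f q)) (dist (f.symm p) (f.symm q)) = lam * dist p q

/-- The local stable set `W^s_r(x)` of `f`. The local unstable set `W^u_r(x)` is encoded as
`localStableSet f.symm r x`. -/
def localStableSet (f : Equiv.Perm M) (r : ℝ) (x : M) : Set M :=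
  {y | ∀ n : ℕ, dist ((f ^ n) x) ((f ^ n) y) ≤ r}

variable {f : Equiv.Perm M} {ξ lam r : ℝ} {p q x y z : M} {n : ℕ}

lemma dist_le_of_mem_localStableSet (h : y ∈ localStableSet f r x) : dist x y ≤ r := h 0

lemma pow_apply_mem_localStableSet (h : y ∈ localStableSet f r x) (n : ℕ) :
    (f ^ n) y ∈ localStableSet f r ((f ^ n) x) := fun k ↦ by
  simpa only [pow_add, Equiv.Perm.mul_apply] using h (k + n)

namespace IsSelfSimilar

lemma symm (hf : IsSelfSimilar f ξ lam) : IsSelfSimilar f.symm ξ lam := fun p q hpq ↦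
  (max_comm _ _).trans (hf p q hpq)

lemma dist_apply_le (hf : IsSelfSimilar f ξ lam) (hpq : dist p q ≤ ξ) :
    dist (f p) (f q) ≤ lam * dist p q :=
  (le_max_left _ _).trans (hf p q hpq).le

lemma dist_apply_apply (hf : IsSelfSimilar f ξ lam) (hlam : 1 < lam)
    (hexp : dist (f p) (f q) = lam * dist p q) (hle : dist (f p) (f q) ≤ ξ) :
    dist (f (f p)) (f (f q)) = lam * dist (f p) (f q) := by
  have hmax := hf _ _ hle
  simp only [Equiv.symm_apply_apply] at hmax
  refine (max_eq_left ?_).symm.trans hmax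
  by_contra! hlt
  rw [max_eq_right hlt.le, hexp] at hmax
  have hpos : 0 < dist p q := dist_nonneg.trans_lt hlt
  have : 1 < lam * lam := one_lt_mul_of_lt_of_le hlam hlam.le
  nlinarith

-- The bound is `lam * ξ` because self-similarity is last applied at time `n - 1`.
lemma dist_pow_apply (hf : IsSelfSimilar f ξ lam) (hlam : 1 < lam)
    (hexp : dist (f p) (f q) = lam * dist p q) (hn : lam ^ n * dist p q ≤ lam * ξ) :
    dist ((f ^ n) p) ((f ^ n) q) = lam ^ n * dist p q := by
  induction n generalizing p q with
  | zero => simp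
  | succ n ih =>
    have hn' : lam ^ n * dist (f p) (f q) ≤ lam * ξ := by rwa [hexp, ← mul_assoc, ← pow_succ]
    rw [pow_succ f, Equiv.Perm.mul_apply, Equiv.Perm.mul_apply, pow_succ, mul_assoc, ← hexp]
    cases n with
    | zero => simp
    | succ k =>
      refine ih (hf.dist_apply_apply hlam hexp ?_) hn'
      have hk : lam ^ k * dist (f p) (f q) ≤ ξ := by
        rw [pow_succ', mul_assoc] at hn'
        exact le_of_mul_le_mul_left hn' (by linarith)
      exact (le_mul_of_one_le_left dist_nonneg (one_le_pow₀ hlam.le)).trans hk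

lemma dist_symm_apply (hf : IsSelfSimilar f ξ lam) (hlam : 1 < lam)
    (h : y ∈ localStableSet f ξ x) : dist (f.symm x) (f.symm y) = lam * dist x y := by
  have hmax := hf x y (dist_le_of_mem_localStableSet h)
  refine (max_eq_right ?_).symm.trans hmax
  by_contra! hlt
  rw [max_eq_left hlt.le] at hmax
  have hpos : 0 < dist x y := by
    have : 0 < lam * dist x y := hmax ▸ dist_nonneg.trans_lt hlt
    exact pos_of_mul_pos_right this (by linarith)
  have hbdd (n : ℕ) : lam ^ n * dist x y ≤ ξ := by
    induction n with
    | zero => simpa using dist_le_of_mem_localStableSet h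
    | succ n ih =>
      refine (hf.dist_pow_apply hlam hmax ?_).symm.trans_le (h (n + 1))
      rw [pow_succ', mul_assoc]
      gcongr
  obtain ⟨n, hn⟩ := pow_unbounded_of_one_lt (ξ / dist x y) hlam
  exact ((div_lt_iff₀ hpos).1 hn).not_ge (hbdd n)

lemma pow_mul_dist_pow_apply (hf : IsSelfSimilar f ξ lam) (hlam : 1 < lam)
    (h : y ∈ localStableSet f ξ x) (n : ℕ) :
    lam ^ n * dist ((f ^ n) x) ((f ^ n) y) = dist x y := by
  induction n with
  | zero => simp
  | succ n ih =>
    have hstep := hf.dist_symm_apply hlam (pow_apply_mem_localStableSet h (n + 1))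
    simp only [pow_succ' f, Equiv.Perm.mul_apply, Equiv.symm_apply_apply] at hstep ⊢
    rw [pow_succ, mul_assoc, ← hstep, ih]

lemma abs_sub_dist_le (hf : IsSelfSimilar f ξ lam) (hlam : 1 < lam)
    (hxz : z ∈ localStableSet f.symm ξ x) (hyz : z ∈ localStableSet f ξ y)
    (hn : lam ^ n * dist x z ≤ lam * ξ) {A : ℝ}
    (hA : dist ((f ^ n) x) ((f ^ n) y) = lam ^ n * A) :
    |A - dist x z| ≤ dist y z / (lam ^ 2) ^ n := by
  have hN : 0 < lam ^ n := by positivity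
  have hgrow : dist ((f ^ n) x) ((f ^ n) z) = lam ^ n * dist x z :=
    hf.dist_pow_apply hlam (hf.symm.dist_symm_apply hlam hxz) hn
  have htriangle : lam ^ n * |A - dist x z| ≤ dist ((f ^ n) y) ((f ^ n) z) :=
    calc lam ^ n * |A - dist x z|
        = |dist ((f ^ n) y) ((f ^ n) x) - dist ((f ^ n) z) ((f ^ n) x)| := by
          rw [dist_comm _ ((f ^ n) x), dist_comm _ ((f ^ n) x), hA, hgrow, ← mul_sub, abs_mul,
            abs_of_pos hN]
      _ ≤ dist ((f ^ n) y) ((f ^ n) z) := abs_dist_sub_le _ _ _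
  rw [le_div_iff₀ (by positivity)]
  calc |A - dist x z| * (lam ^ 2) ^ n
      = lam ^ n * (lam ^ n * |A - dist x z|) := by ring
    _ ≤ lam ^ n * dist ((f ^ n) y) ((f ^ n) z) := by gcongr
    _ = dist y z := hf.pow_mul_dist_pow_apply hlam hyz n

end IsSelfSimilar

/-- Critical triangles for `f`, with the local stable and unstable sets taken of size `ξ`. -/
structure IsCriticalTriangle (f : Equiv.Perm M) (ξ lam : ℝ) (x y z : M) : Prop where
  mem_unstable : z ∈ localStableSet f.symm ξ x
  mem_stable : z ∈ localStableSet f ξ y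
  dist_pos : 0 < dist x y
  dist_lt : dist x y < ξ
  dist_symm_apply : dist (f.symm x) (f.symm y) = lam * dist x y
  dist_apply_apply : dist (f (f x)) (f (f y)) = lam * dist (f x) (f y)

/-- A bound for the ratio of either of the sides `xz`, `zy` of a critical triangle to the side
`xy`; it is the sum of the geometric series with ratio `lam⁻²`. -/
noncomputable def sideBound (lam : ℝ) : ℝ := lam ^ 2 / (lam ^ 2 - 1)

lemma one_lt_sideBound (hlam : 1 < lam) : 1 < sideBound lam := by
  have : 1 < lam ^ 2 := one_lt_pow₀ hlam two_ne_zero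
  rw [sideBound, one_lt_div (by linarith)]
  linarith

namespace IsCriticalTriangle

lemma abs_dist_apply_div_sub_le (h : IsCriticalTriangle f ξ lam x y z)
    (hf : IsSelfSimilar f ξ lam) (hlam : 1 < lam)
    (hxz : lam ^ n * dist x z ≤ ξ) (hxy : lam ^ n * dist x y ≤ ξ) :
    |dist (f x) (f y) / lam - dist x z| ≤ dist z y / (lam ^ 2) ^ (n + 1) := by
  have hgrow : dist ((f ^ (n + 1)) x) ((f ^ (n + 1)) y) =
      lam ^ (n + 1) * (dist (f x) (f y) / lam) := by
    rw [pow_succ f, Equiv.Perm.mul_apply, Equiv.Perm.mul_apply, pow_succ, mul_assoc,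
      mul_div_cancel₀ _ (by positivity)]
    refine hf.dist_pow_apply hlam h.dist_apply_apply ?_
    calc lam ^ n * dist (f x) (f y)
        ≤ lam ^ n * (lam * dist x y) := by
          gcongr
          exact hf.dist_apply_le h.dist_lt.le
      _ = lam * (lam ^ n * dist x y) := by ring
      _ ≤ lam * ξ := by gcongr
  rw [dist_comm z y]
  refine hf.abs_sub_dist_le hlam h.mem_unstable h.mem_stable ?_ hgrow
  rw [pow_succ', mul_assoc]
  gcongr

lemma abs_dist_sub_le (h : IsCriticalTriangle f ξ lam x y z)
    (hf : IsSelfSimilar f ξ lam) (hlam : 1 < lam)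
    (hzy : lam ^ n * dist z y ≤ ξ) (hxy : lam ^ n * dist x y ≤ ξ) :
    |dist x y - dist z y| ≤ dist x z / (lam ^ 2) ^ (n + 1) := by
  have hgrow : dist ((f.symm ^ (n + 1)) y) ((f.symm ^ (n + 1)) x) = lam ^ (n + 1) * dist x y := by
    rw [dist_comm]
    refine hf.symm.dist_pow_apply hlam h.dist_symm_apply ?_
    rw [pow_succ', mul_assoc]
    gcongr
  rw [dist_comm z y] at hzy ⊢
  refine hf.symm.abs_sub_dist_le hlam h.mem_stable h.mem_unstable ?_ hgrow
  rw [pow_succ', mul_assoc]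
  gcongr

lemma dist_le_sideBound_mul (h : IsCriticalTriangle f ξ lam x y z)
    (hf : IsSelfSimilar f ξ lam) (hlam : 1 < lam) :
    dist x z ≤ sideBound lam * dist x y ∧ dist z y ≤ sideBound lam * dist x y := by
  have hxz : dist x z ≤ ξ := dist_le_of_mem_localStableSet h.mem_unstable
  have hzy : dist z y ≤ ξ := by
    simpa only [dist_comm] using dist_le_of_mem_localStableSet h.mem_stable
  have h₁ : |dist (f x) (f y) / lam - dist x z| ≤ dist z y / lam ^ 2 := by
    simpa using h.abs_dist_apply_div_sub_le (n := 0) hf hlam (by simpa)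
      (by simpa using h.dist_lt.le)
  have h₀ : |dist x y - dist z y| ≤ dist x z / lam ^ 2 := by
    simpa using h.abs_dist_sub_le (n := 0) hf hlam (by simpa) (by simpa using h.dist_lt.le)
  have hc₁ : dist (f x) (f y) / lam ≤ dist x y := by
    rw [div_le_iff₀' (by positivity)]
    exact hf.dist_apply_le h.dist_lt.le
  have hxz_le : dist x z ≤ dist x y + dist z y / lam ^ 2 := by linarith [(abs_le.1 h₁).1]
  have hzy_le : dist z y ≤ dist x y + dist x z / lam ^ 2 := by linarith [(abs_le.1 h₀).1]
  have hlam2 : 1 < lam ^ 2 := one_lt_pow₀ hlam two_ne_zero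
  exact ⟨le_div_sub_one_mul_of_le_add_div hlam2 hxz_le hzy_le,
    le_div_sub_one_mul_of_le_add_div hlam2 hzy_le hxz_le⟩

lemma abs_ratio_sub_ratio_le (h : IsCriticalTriangle f ξ lam x y z)
    (hf : IsSelfSimilar f ξ lam) (hlam : 1 < lam)
    (hn : lam ^ n * (sideBound lam * dist x y) ≤ ξ)
    (hlarge : 2 * sideBound lam ≤ (lam ^ 2) ^ (n + 1)) :
    |dist (f x) (f y) / (lam * dist x y) - dist x z / dist z y| ≤
      4 * sideBound lam ^ 2 / (lam ^ 2) ^ (n + 1) := by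
  obtain ⟨hxz, hzy⟩ := h.dist_le_sideBound_mul hf hlam
  have hxy : dist x y ≤ sideBound lam * dist x y :=
    le_mul_of_one_le_left dist_nonneg (one_lt_sideBound hlam).le
  have hsmall {t : ℝ} (ht : t ≤ sideBound lam * dist x y) : lam ^ n * t ≤ ξ :=
    (mul_le_mul_of_nonneg_left ht (by positivity)).trans hn
  rw [← div_div]
  exact abs_div_sub_div_le h.dist_pos dist_nonneg (by positivity) hlarge hxz hzy
    (h.abs_dist_apply_div_sub_le hf hlam (hsmall hxz) (hsmall hxy))
    (h.abs_dist_sub_le hf hlam (hsmall hzy) (hsmall hxy))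

end IsCriticalTriangle

theorem stmt_8_general (hξ : 0 < ξ) (hlam : 1 < lam) (hf : IsSelfSimilar f ξ lam) :
    ∀ ε > (0 : ℝ), ∃ δ > (0 : ℝ), ∀ x y z : M, IsCriticalTriangle f ξ lam x y z → dist x y < δ →
      |dist (f x) (f y) / (lam * dist x y) - dist x z / dist z y| < ε := by
  intro ε hε
  have hL : 0 < sideBound lam := one_pos.trans (one_lt_sideBound hlam)
  have hlam2 : 1 < lam ^ 2 := one_lt_pow₀ hlam two_ne_zero
  obtain ⟨n, hn⟩ := pow_unbounded_of_one_lt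
    (max (2 * sideBound lam) (4 * sideBound lam ^ 2 / ε)) hlam2
  obtain ⟨hlarge, hsmall⟩ := max_lt_iff.1 (hn.trans (pow_lt_pow_right₀ hlam2 n.lt_succ_self))
  refine ⟨ξ / (lam ^ n * sideBound lam), by positivity, fun x y z h hδ ↦ ?_⟩
  have hxy : lam ^ n * (sideBound lam * dist x y) ≤ ξ := by
    rw [← mul_assoc]
    exact ((lt_div_iff₀' (by positivity)).1 hδ).le
  exact (h.abs_ratio_sub_ratio_le hf hlam hxy hlarge.le).trans_lt
    ((div_lt_comm₀ hε (by positivity)).1 hsmall)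

end SelfSimilar

theorem stmt_8 {M : Type*} [MetricSpace M] [CompactSpace M]
    (f : Equiv.Perm M) (hf : Continuous f) (hf' : Continuous f.symm)
    (ξ lam : ℝ) (hξ : 0 < ξ) (hlam : 1 < lam)
    (hexp : ∀ x y : M, x ≠ y → ∃ n : ℤ, ξ < dist ((f ^ n) x) ((f ^ n) y))
    (hss : ∀ p q : M, dist p q ≤ ξ →
      max (dist (f p) (f q)) (dist (f.symm p) (f.symm q)) = lam * dist p q) :
    ∀ ε > (0 : ℝ), ∃ δ > (0 : ℝ), ∀ x y z : M,
      (∀ n : ℕ, dist ((f.symm ^ n) x) ((f.symm ^ n) z) ≤ ξ / (2 * lam)) →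
      (∀ n : ℕ, dist ((f ^ n) y) ((f ^ n) z) ≤ ξ / (2 * lam)) →
      0 < dist x y → dist x y < ξ →
      dist (f.symm x) (f.symm y) = lam * dist x y →
      dist (f (f x)) (f (f y)) = lam * dist (f x) (f y) →
      dist x y < δ →
      |dist (f x) (f y) / (lam * dist x y) - dist x z / dist z y| < ε := by
  have hr : ξ / (2 * lam) ≤ ξ := div_le_self hξ.le (by linarith)
  intro ε hε
  obtain ⟨δ, hδ, hratio⟩ := stmt_8_general hξ hlam hss ε hε
  exact ⟨δ, hδ, fun x y z hu hs hpos hlt hback hforth ↦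
    hratio x y z ⟨fun n ↦ (hu n).trans hr, fun n ↦ (hs n).trans hr, hpos, hlt, hback, hforth⟩⟩
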